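/- Sharpness of the conforming upper bound: under the hypotheses of the conforming majorant estimate, the field v̂ := A∇û belongs to L²(Ω;ℝ^N) and has weak divergence div v̂ = −f ∈ L²₊₁(Ω), and M₊(∇ũ, v̂) = c_{N,α}‖f + div v̂‖_{L²₊₁(Ω)} + ‖∇ũ − A^{−1}v̂‖_A = ‖∇(û − ũ)‖_A; hence the infimum of M₊(∇ũ, v) over all v ∈ L²(Ω;ℝ^N) with weak divergence in L²₊₁(Ω) equals ‖∇(û − ũ)‖_A and is attained. -/

import Mathlib

open MeasureTheory Filter Topology
open scoped RealInnerProductSpace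

noncomputable section

/-- Euclidean space `ℝ^N`. -/
abbrev Euc (N : ℕ) := EuclideanSpace ℝ (Fin N)

/-- The Poincaré constant `c_N = 2/(N-2)`. -/
def cN (N : ℕ) : ℝ := 2 / ((N : ℝ) - 2)

variable {N : ℕ}

/-- Squared weighted `L²_s(Ω)` norm: `∫_Ω (1+|x|²)^s u(x)² dx`. -/
def sqL2 (Ω : Set (Euc N)) (s : ℝ) (u : Euc N → ℝ) : ℝ :=
  ∫ x in Ω, (1 + ‖x‖ ^ 2) ^ s * u x ^ 2

/-- Weighted `L²_s(Ω)` norm. -/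
def nrmL2 (Ω : Set (Euc N)) (s : ℝ) (u : Euc N → ℝ) : ℝ :=
  Real.sqrt (sqL2 Ω s u)

/-- Membership in the weighted space `L²_s(Ω)` (scalar functions). -/
def MemL2 (Ω : Set (Euc N)) (s : ℝ) (u : Euc N → ℝ) : Prop :=
  AEStronglyMeasurable u (volume.restrict Ω) ∧
    Integrable (fun x => (1 + ‖x‖ ^ 2) ^ s * u x ^ 2) (volume.restrict Ω)

/-- Squared weighted `L²_s(Ω;ℝ^N)` norm for vector fields. -/
def sqL2V (Ω : Set (Euc N)) (s : ℝ) (v : Euc N → Euc N) : ℝ :=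
  ∫ x in Ω, (1 + ‖x‖ ^ 2) ^ s * ‖v x‖ ^ 2

/-- Weighted `L²_s(Ω;ℝ^N)` norm for vector fields. -/
def nrmL2V (Ω : Set (Euc N)) (s : ℝ) (v : Euc N → Euc N) : ℝ :=
  Real.sqrt (sqL2V Ω s v)

/-- Membership in the weighted space `L²_s(Ω;ℝ^N)` (vector fields). -/
def MemL2V (Ω : Set (Euc N)) (s : ℝ) (v : Euc N → Euc N) : Prop :=
  AEStronglyMeasurable v (volume.restrict Ω) ∧
    Integrable (fun x => (1 + ‖x‖ ^ 2) ^ s * ‖v x‖ ^ 2) (volume.restrict Ω)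

/-- Test functions: `φ ∈ C_c^∞(Ω)`. -/
def IsTest (Ω : Set (Euc N)) (φ : Euc N → ℝ) : Prop :=
  ContDiff ℝ (⊤ : ℕ∞) φ ∧ HasCompactSupport φ ∧ tsupport φ ⊆ Ω

/-- `g` is the weak gradient of `u` on `Ω`:
`∫_Ω u ∇φ = −∫_Ω φ g` for all test functions `φ`. -/
def IsWeakGrad (Ω : Set (Euc N)) (u : Euc N → ℝ) (g : Euc N → Euc N) : Prop :=
  ∀ φ : Euc N → ℝ, IsTest Ω φ →
    (∫ x in Ω, u x • gradient φ x) = - ∫ x in Ω, φ x • g x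

/-- `d` is the weak divergence of the vector field `v` on `Ω`:
`∫_Ω v·∇φ = −∫_Ω d φ` for all test functions `φ`. -/
def IsWeakDiv (Ω : Set (Euc N)) (v : Euc N → Euc N) (d : Euc N → ℝ) : Prop :=
  ∀ φ : Euc N → ℝ, IsTest Ω φ →
    (∫ x in Ω, ⟪v x, gradient φ x⟫) = - ∫ x in Ω, d x * φ x

/-- `u ∈ H¹°₋₁(Ω)` with weak gradient `g`: `u ∈ L²₋₁(Ω)`, `g ∈ L²(Ω;ℝ^N)` is the weak
gradient of `u`, and `u` is approximated by test functions in the natural norms. -/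
def MemH10 (Ω : Set (Euc N)) (u : Euc N → ℝ) (g : Euc N → Euc N) : Prop :=
  MemL2 Ω (-1) u ∧ MemL2V Ω 0 g ∧ IsWeakGrad Ω u g ∧
    ∃ φ : ℕ → Euc N → ℝ, (∀ n, IsTest Ω (φ n)) ∧
      Tendsto (fun n => nrmL2 Ω (-1) (fun x => u x - φ n x)) atTop (𝓝 0) ∧
      Tendsto (fun n => nrmL2V Ω 0 (fun x => g x - gradient (φ n) x)) atTop (𝓝 0)

/-- `g ∈ 𝒢`, the closure in `L²(Ω;ℝ^N)` of `{∇φ : φ ∈ C_c^∞(Ω)}`. -/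
def MemG (Ω : Set (Euc N)) (g : Euc N → Euc N) : Prop :=
  MemL2V Ω 0 g ∧
    ∃ φ : ℕ → Euc N → ℝ, (∀ n, IsTest Ω (φ n)) ∧
      Tendsto (fun n => nrmL2V Ω 0 (fun x => g x - gradient (φ n) x)) atTop (𝓝 0)

/-- `ψ ∈ D₀`, the set of weakly divergence-free fields in `L²(Ω;ℝ^N)`. -/
def MemD0 (Ω : Set (Euc N)) (ψ : Euc N → Euc N) : Prop :=
  MemL2V Ω 0 ψ ∧
    ∀ φ : Euc N → ℝ, IsTest Ω φ → (∫ x in Ω, ⟪ψ x, gradient φ x⟫) = 0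

/-- The coefficient matrix field `A : Ω → ℝ^{N×N}`: measurable, essentially bounded,
symmetric, and uniformly coercive (`A(x)ξ·ξ ≥ α⁻²|ξ|²` for a.e. `x ∈ Ω`). -/
structure Coeff (N : ℕ) (Ω : Set (Euc N)) where
  A : Euc N → Euc N →L[ℝ] Euc N
  α : ℝ
  α_pos : 0 < α
  meas : ∀ ξ : Euc N, AEStronglyMeasurable (fun x => A x ξ) (volume.restrict Ω)
  bdd : ∃ C : ℝ, ∀ᵐ x ∂(volume.restrict Ω), ∀ ξ : Euc N, ‖A x ξ‖ ≤ C * ‖ξ‖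
  symm : ∀ x : Euc N, ∀ ξ η : Euc N, ⟪A x ξ, η⟫ = ⟪ξ, A x η⟫
  coer : ∀ᵐ x ∂(volume.restrict Ω), ∀ ξ : Euc N, α⁻¹ ^ 2 * ‖ξ‖ ^ 2 ≤ ⟪A x ξ, ξ⟫

/-- The weighted inner product `⟨v,w⟩_A = ∫_Ω A v · w dx`. -/
def ipA (Ω : Set (Euc N)) (A : Euc N → Euc N →L[ℝ] Euc N) (v w : Euc N → Euc N) : ℝ :=
  ∫ x in Ω, ⟪A x (v x), w x⟫

/-- The squared `A`-weighted norm `‖v‖²_A = ∫_Ω A v · v dx`. -/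
def sqA (Ω : Set (Euc N)) (A : Euc N → Euc N →L[ℝ] Euc N) (v : Euc N → Euc N) : ℝ :=
  ipA Ω A v v

/-- The `A`-weighted norm `‖v‖_A`. -/
def nrmA (Ω : Set (Euc N)) (A : Euc N → Euc N →L[ℝ] Euc N) (v : Euc N → Euc N) : ℝ :=
  Real.sqrt (sqA Ω A v)

/-- `w = A⁻¹ v` (a.e. on `Ω`), with `w ∈ L²(Ω;ℝ^N)`. -/
def IsAInv (Ω : Set (Euc N)) (A : Euc N → Euc N →L[ℝ] Euc N) (v w : Euc N → Euc N) : Prop :=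
  MemL2V Ω 0 w ∧ ∀ᵐ x ∂(volume.restrict Ω), A x (w x) = v x

/-! Let `e = ∇û − ∇ũ`. Testing the equation for `û` and the divergence of `v` with `φ` gives
`∫ A e · ∇φ = ∫ (f + div v) φ − ∫ A (∇ũ − A⁻¹ v) · ∇φ`. Hardy's inequality with constant `c_N` and
coercivity bound the first term, the Cauchy–Schwarz inequality for the energy pairing bounds the
second, so `∫ A e · ∇φ ≤ M₊(∇ũ, v) ‖∇φ‖_A`. As `e` is a limit of such gradients, this yields
`‖e‖_A ≤ M₊(∇ũ, v)`. For `v = A ∇û` the residual `f + div v` vanishes and the flux term is `‖e‖_A`.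

Hardy's inequality comes from completing the square in `|∇φ + c φ x / (1 + |x|²)|² ≥ 0` with
`c = (N − 2) / 2`: the cross term integrates by parts through the Euler identity
`∫ x · ∇ψ = −N ∫ ψ` for `ψ = φ² / (1 + |x|²)`. -/

section Gradient

variable {𝕜 E : Type*} [RCLike 𝕜] [NormedAddCommGroup E] [InnerProductSpace 𝕜 E] [CompleteSpace E]
  {φ : E → 𝕜}

lemma continuous_gradient_of_contDiff (hφ : ContDiff 𝕜 1 φ) : Continuous (gradient φ) :=
  (InnerProductSpace.toDual 𝕜 E).symm.continuous.comp (hφ.continuous_fderiv one_ne_zero)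

lemma hasCompactSupport_gradient (hφ : HasCompactSupport φ) : HasCompactSupport (gradient φ) :=
  (hφ.fderiv 𝕜).comp_left (map_zero (InnerProductSpace.toDual 𝕜 E).symm)

end Gradient

section Hardy

/- Integrate by parts each term of `Dψ(x) x = ∑ i, xᵢ ∂ᵢψ(x)`. -/
lemma integral_fderiv_apply_self {E : Type*} [NormedAddCommGroup E] [NormedSpace ℝ E]
    [FiniteDimensional ℝ E] [MeasurableSpace E] [BorelSpace E] (μ : Measure E)
    [μ.IsAddHaarMeasure] {ψ : E → ℝ} (hψ : ContDiff ℝ 1 ψ) (hc : HasCompactSupport ψ) :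
    ∫ x, fderiv ℝ ψ x x ∂μ = -(Module.finrank ℝ E * ∫ x, ψ x ∂μ) := by
  let b := Module.finBasis ℝ E
  let coord i : E →L[ℝ] ℝ := (b.coord i).toContinuousLinearMap
  have hψ' i : Continuous fun x => fderiv ℝ ψ x (b i) :=
    (hψ.continuous_fderiv one_ne_zero).clm_apply continuous_const
  have hterm i : Integrable (fun x => coord i x * fderiv ℝ ψ x (b i)) μ :=
    ((coord i).continuous.mul (hψ' i)).integrable_of_hasCompactSupport
      (hc.fderiv_apply ℝ (b i)).mul_left
  have by_parts i : ∫ x, coord i x * fderiv ℝ ψ x (b i) ∂μ = -∫ x, ψ x ∂μ := by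
    have coord_self : coord i (b i) = 1 := by simp [coord]
    rw [integral_mul_fderiv_eq_neg_fderiv_mul_of_integrable]
    · simp only [ContinuousLinearMap.fderiv, coord_self, one_mul]
    · simpa only [ContinuousLinearMap.fderiv, coord_self, one_mul] using
        hψ.continuous.integrable_of_hasCompactSupport hc
    · exact hterm i
    · exact ((coord i).continuous.mul hψ.continuous).integrable_of_hasCompactSupport hc.mul_left
    · exact fun x _ => (coord i).differentiableAt
    · exact fun x _ => hψ.differentiable one_ne_zero x
  calc ∫ x, fderiv ℝ ψ x x ∂μ
      = ∫ x, ∑ i, coord i x * fderiv ℝ ψ x (b i) ∂μ := by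
        refine integral_congr_ae (.of_forall fun x => ?_)
        change fderiv ℝ ψ x x = _
        conv_lhs => enter [2]; rw [← b.sum_repr x]
        simp only [map_sum, map_smul, smul_eq_mul]
        rfl
    _ = ∑ i, ∫ x, coord i x * fderiv ℝ ψ x (b i) ∂μ := integral_finsetSum _ fun i _ => hterm i
    _ = -(Module.finrank ℝ E * ∫ x, ψ x ∂μ) := by simp [by_parts]

variable {E : Type*} [NormedAddCommGroup E] [InnerProductSpace ℝ E]

lemma fderiv_sq_div_one_add_norm_sq_apply_self {φ : E → ℝ} {x : E}
    (hφ : DifferentiableAt ℝ φ x) :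
    fderiv ℝ (fun y => φ y ^ 2 / (1 + ‖y‖ ^ 2)) x x =
      2 * φ x * fderiv ℝ φ x x / (1 + ‖x‖ ^ 2) -
        2 * φ x ^ 2 * ‖x‖ ^ 2 / (1 + ‖x‖ ^ 2) ^ 2 := by
  have hpos : 1 + ‖x‖ ^ 2 ≠ 0 := by positivity
  have hnorm : HasFDerivAt (fun y : E => 1 + ‖y‖ ^ 2) (2 • innerSL ℝ x) x :=
    (hasStrictFDerivAt_norm_sq x).hasFDerivAt.const_add 1
  have hinv : HasFDerivAt (fun y : E => (1 + ‖y‖ ^ 2)⁻¹) _ x :=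
    (hasDerivAt_inv hpos).comp_hasFDerivAt x hnorm
  simp_rw [div_eq_mul_inv]
  rw [((hφ.hasFDerivAt.pow 2).fun_mul hinv).fderiv]
  simp only [neg_smul, smul_neg, Nat.add_one_sub_one, pow_one, nsmul_eq_mul, Nat.cast_ofNat,
    add_apply, neg_apply, smul_apply, coe_innerSL_apply, inner_self_eq_norm_sq_to_K,
    Real.ringHom_apply, smul_eq_mul]
  field_simp
  ring

/- Expand `0 ≤ ‖g + (c a / (1 + ‖x‖²)) x‖²`. -/
lemma sq_mul_sq_div_le_norm_sq_add (g x : E) (a : ℝ) {c : ℝ} (hc : 0 ≤ c) :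
    c ^ 2 * (a ^ 2 / (1 + ‖x‖ ^ 2)) ≤
      ‖g‖ ^ 2 + c * ((2 * c + 2) * (a ^ 2 / (1 + ‖x‖ ^ 2)) +
        (2 * a * ⟪g, x⟫ / (1 + ‖x‖ ^ 2) - 2 * a ^ 2 * ‖x‖ ^ 2 / (1 + ‖x‖ ^ 2) ^ 2)) := by
  have hsq : 0 ≤ ‖g + (c * a / (1 + ‖x‖ ^ 2)) • x‖ ^ 2 +
      (c ^ 2 + 2 * c) * (a / (1 + ‖x‖ ^ 2)) ^ 2 := by positivity
  rw [norm_add_sq_real, norm_smul, inner_smul_right, mul_pow, Real.norm_eq_abs, sq_abs] at hsq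
  refine le_of_sub_nonneg (hsq.trans_eq ?_)
  field_simp
  ring

theorem hardy_inequality [FiniteDimensional ℝ E] [MeasurableSpace E] [BorelSpace E]
    (μ : Measure E) [μ.IsAddHaarMeasure] (hE : 2 ≤ Module.finrank ℝ E) {φ : E → ℝ}
    (hφ : ContDiff ℝ 1 φ) (hc : HasCompactSupport φ) :
    (((Module.finrank ℝ E : ℝ) - 2) / 2) ^ 2 * ∫ x, φ x ^ 2 / (1 + ‖x‖ ^ 2) ∂μ ≤
      ∫ x, ‖gradient φ x‖ ^ 2 ∂μ := by
  set c : ℝ := ((Module.finrank ℝ E : ℝ) - 2) / 2 with hc_def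
  have hc0 : 0 ≤ c := by
    have : (2 : ℝ) ≤ Module.finrank ℝ E := by exact_mod_cast hE
    linarith
  let ψ x := φ x ^ 2 / (1 + ‖x‖ ^ 2)
  have hψ : ContDiff ℝ 1 ψ := (hφ.pow 2).div (contDiff_const.add (contDiff_norm_sq ℝ))
    fun x => by positivity
  have hψc : HasCompactSupport ψ := hc.mono fun x hx h => hx (by simp [ψ, h])
  have hgrad : Integrable (fun x => ‖gradient φ x‖ ^ 2) μ :=
    ((continuous_gradient_of_contDiff hφ).norm.pow 2).integrable_of_hasCompactSupport
      ((hasCompactSupport_gradient hc).mono fun x hx h => hx (by simp [h]))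
  have hint : Integrable ψ μ := hψ.continuous.integrable_of_hasCompactSupport hψc
  have hradial : Integrable (fun x => fderiv ℝ ψ x x) μ := by
    refine ((hψ.continuous_fderiv one_ne_zero).clm_apply
      continuous_id).integrable_of_hasCompactSupport ((hψc.fderiv ℝ).mono fun x hx h => hx ?_)
    simp [h]
  have hdiv_int : Integrable (fun x => (2 * c + 2) * ψ x + fderiv ℝ ψ x x) μ :=
    (hint.const_mul _).add hradial
  have pointwise x : c ^ 2 * ψ x ≤
      ‖gradient φ x‖ ^ 2 + c * ((2 * c + 2) * ψ x + fderiv ℝ ψ x x) := by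
    rw [fderiv_sq_div_one_add_norm_sq_apply_self (hφ.differentiable one_ne_zero x),
      ← inner_gradient_left]
    exact sq_mul_sq_div_le_norm_sq_add _ _ _ hc0
  have hdiv : ∫ x, ((2 * c + 2) * ψ x + fderiv ℝ ψ x x) ∂μ = 0 := by
    rw [integral_add (hint.const_mul _) hradial, integral_const_mul,
      integral_fderiv_apply_self μ hψ hψc, hc_def]
    ring
  calc c ^ 2 * ∫ x, ψ x ∂μ
      = ∫ x, c ^ 2 * ψ x ∂μ := (integral_const_mul ..).symm
    _ ≤ ∫ x, (‖gradient φ x‖ ^ 2 + c * ((2 * c + 2) * ψ x + fderiv ℝ ψ x x)) ∂μ :=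
        integral_mono (hint.const_mul _) (hgrad.add (hdiv_int.const_mul c)) pointwise
    _ = ∫ x, ‖gradient φ x‖ ^ 2 ∂μ := by
        rw [integral_add hgrad (hdiv_int.const_mul c), integral_const_mul, hdiv, mul_zero,
          add_zero]

end Hardy

section SquareIntegrable

variable {α : Type*} [MeasurableSpace α] {μ : Measure α}

lemma integrable_inner_of_memLp_two {𝕜 E : Type*} [RCLike 𝕜] [NormedAddCommGroup E]
    [InnerProductSpace 𝕜 E] {f g : α → E} (hf : MemLp f 2 μ) (hg : MemLp g 2 μ) :
    Integrable (fun x => inner 𝕜 (f x) (g x)) μ := by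
  refine (L2.integrable_inner (𝕜 := 𝕜) (hf.toLp f) (hg.toLp g)).congr ?_
  filter_upwards [hf.coeFn_toLp, hg.coeFn_toLp] with x hfx hgx
  rw [hfx, hgx]

lemma abs_integral_mul_le_sqrt_mul_sqrt {f g : α → ℝ} (hf : MemLp f 2 μ) (hg : MemLp g 2 μ) :
    |∫ x, f x * g x ∂μ| ≤ √(∫ x, f x ^ 2 ∂μ) * √(∫ x, g x ^ 2 ∂μ) := by
  have inner_toLp {u v : α → ℝ} (hu : MemLp u 2 μ) (hv : MemLp v 2 μ) :
      ⟪hu.toLp u, hv.toLp v⟫ = ∫ x, u x * v x ∂μ := by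
    rw [L2.inner_def]
    refine integral_congr_ae ?_
    filter_upwards [hu.coeFn_toLp, hv.coeFn_toLp] with x hux hvx
    rw [hux, hvx, real_inner_eq_re_inner, RCLike.inner_apply]
    simp [mul_comm]
  have norm_toLp {u : α → ℝ} (hu : MemLp u 2 μ) : ‖hu.toLp u‖ = √(∫ x, u x ^ 2 ∂μ) := by
    rw [norm_eq_sqrt_real_inner, inner_toLp hu hu]
    simp only [sq]
  rw [← inner_toLp hf hg, ← norm_toLp hf, ← norm_toLp hg]
  exact abs_real_inner_le_norm _ _

end SquareIntegrable

section WeightedL2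

variable {Ω : Set (Euc N)} {s : ℝ} {u v : Euc N → ℝ}

lemma continuous_one_add_norm_sq_rpow (s : ℝ) :
    Continuous fun x : Euc N => (1 + ‖x‖ ^ 2) ^ s :=
  (by fun_prop : Continuous fun x : Euc N => 1 + ‖x‖ ^ 2).rpow_const
    fun x => .inl (by positivity)

lemma sq_one_add_norm_sq_rpow_half (s : ℝ) (x : Euc N) :
    ((1 + ‖x‖ ^ 2) ^ (s / 2)) ^ 2 = (1 + ‖x‖ ^ 2) ^ s := by
  rw [← Real.rpow_mul_natCast (by positivity)]
  congr 1
  push_cast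
  ring

lemma memL2_iff_memLp :
    MemL2 Ω s u ↔
      AEStronglyMeasurable u (volume.restrict Ω) ∧
        MemLp (fun x => (1 + ‖x‖ ^ 2) ^ (s / 2) * u x) 2 (volume.restrict Ω) := by
  refine and_congr_right fun hu => ?_
  have hmeas : AEStronglyMeasurable (fun x => (1 + ‖x‖ ^ 2) ^ (s / 2) * u x)
      (volume.restrict Ω) :=
    (continuous_one_add_norm_sq_rpow _).aestronglyMeasurable.mul hu
  rw [memLp_two_iff_integrable_sq hmeas]
  simp only [mul_pow, sq_one_add_norm_sq_rpow_half]

lemma nrmL2_eq_sqrt_integral_sq (Ω : Set (Euc N)) (s : ℝ) (u : Euc N → ℝ) :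
    nrmL2 Ω s u = √(∫ x in Ω, ((1 + ‖x‖ ^ 2) ^ (s / 2) * u x) ^ 2) := by
  simp only [nrmL2, sqL2, mul_pow, sq_one_add_norm_sq_rpow_half]

lemma MemL2.neg (hu : MemL2 Ω s u) : MemL2 Ω s (fun x => -u x) :=
  ⟨hu.1.neg, by simpa only [neg_sq] using hu.2⟩

lemma MemL2.add (hu : MemL2 Ω s u) (hv : MemL2 Ω s v) : MemL2 Ω s (fun x => u x + v x) := by
  rw [memL2_iff_memLp] at *
  refine ⟨hu.1.add hv.1, ?_⟩
  simp only [mul_add]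
  exact hu.2.add hv.2

lemma weight_mul_weight_neg (s : ℝ) (x : Euc N) (a b : ℝ) :
    ((1 + ‖x‖ ^ 2) ^ (s / 2) * a) * ((1 + ‖x‖ ^ 2) ^ (-s / 2) * b) = a * b := by
  have hweight : (1 + ‖x‖ ^ 2) ^ (s / 2) * (1 + ‖x‖ ^ 2) ^ (-s / 2) = 1 := by
    rw [← Real.rpow_add (by positivity), neg_div, add_neg_cancel, Real.rpow_zero]
  rw [mul_mul_mul_comm, hweight, one_mul]

lemma MemL2.integrable_mul (hu : MemL2 Ω s u) (hv : MemL2 Ω (-s) v) :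
    IntegrableOn (fun x => u x * v x) Ω := by
  simpa only [IntegrableOn, Pi.mul_def, weight_mul_weight_neg] using
    (memL2_iff_memLp.1 hu).2.integrable_mul (memL2_iff_memLp.1 hv).2

lemma MemL2.abs_integral_mul_le (hu : MemL2 Ω s u) (hv : MemL2 Ω (-s) v) :
    |∫ x in Ω, u x * v x| ≤ nrmL2 Ω s u * nrmL2 Ω (-s) v := by
  simpa only [weight_mul_weight_neg, nrmL2_eq_sqrt_integral_sq] using
    abs_integral_mul_le_sqrt_mul_sqrt (memL2_iff_memLp.1 hu).2 (memL2_iff_memLp.1 hv).2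

lemma memL2V_zero_iff_memLp {v : Euc N → Euc N} :
    MemL2V Ω 0 v ↔ MemLp v 2 (volume.restrict Ω) := by
  simp only [MemL2V, Real.rpow_zero, one_mul]
  exact ⟨fun h => (memLp_two_iff_integrable_sq_norm h.1).2 h.2,
    fun h => ⟨h.1, (memLp_two_iff_integrable_sq_norm h.1).1 h⟩⟩

lemma nrmL2V_zero (Ω : Set (Euc N)) (v : Euc N → Euc N) :
    nrmL2V Ω 0 v = √(∫ x in Ω, ‖v x‖ ^ 2) := by
  simp only [nrmL2V, sqL2V, Real.rpow_zero, one_mul]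

end WeightedL2

section TestFunctions

variable {Ω : Set (Euc N)} {φ : Euc N → ℝ}

lemma IsTest.contDiff_one (hφ : IsTest Ω φ) : ContDiff ℝ 1 φ :=
  hφ.1.of_le (by exact_mod_cast le_top)

lemma IsTest.memL2 (hφ : IsTest Ω φ) (s : ℝ) : MemL2 Ω s φ :=
  memL2_iff_memLp.2 ⟨hφ.1.continuous.aestronglyMeasurable,
    (((continuous_one_add_norm_sq_rpow _).mul hφ.1.continuous).memLp_of_hasCompactSupport
      hφ.2.1.mul_left).restrict Ω⟩

lemma IsTest.memLp_gradient (hφ : IsTest Ω φ) :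
    MemLp (gradient φ) 2 (volume.restrict Ω) :=
  ((continuous_gradient_of_contDiff hφ.contDiff_one).memLp_of_hasCompactSupport
    (hasCompactSupport_gradient hφ.2.1)).restrict Ω

lemma IsTest.eq_zero_of_notMem (hφ : IsTest Ω φ) {x : Euc N} (hx : x ∉ Ω) : φ x = 0 :=
  image_eq_zero_of_notMem_tsupport fun h => hx (hφ.2.2 h)

lemma IsTest.gradient_eq_zero_of_notMem (hφ : IsTest Ω φ) {x : Euc N} (hx : x ∉ Ω) :
    gradient φ x = 0 := by
  have hfderiv : fderiv ℝ φ x = 0 := by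
    by_contra h
    exact hx (hφ.2.2 (support_fderiv_subset ℝ h))
  rw [gradient, hfderiv, map_zero]

lemma cN_pos (hN : 3 ≤ N) : 0 < cN N := by
  have : (3 : ℝ) ≤ N := by exact_mod_cast hN
  exact div_pos two_pos (by linarith)

lemma IsTest.nrmL2_le (hN : 3 ≤ N) (hφ : IsTest Ω φ) :
    nrmL2 Ω (-1) φ ≤ cN N * nrmL2V Ω 0 (gradient φ) := by
  have hdim : 2 ≤ Module.finrank ℝ (Euc N) := by rw [finrank_euclideanSpace_fin]; lia
  have hardy := hardy_inequality volume hdim hφ.contDiff_one hφ.2.1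
  have hc : ((N : ℝ) - 2) / 2 = (cN N)⁻¹ := (inv_div ..).symm
  rw [finrank_euclideanSpace_fin, hc, inv_pow, inv_mul_le_iff₀ (pow_pos (cN_pos hN) 2)] at hardy
  have hscalar : sqL2 Ω (-1) φ = ∫ x, φ x ^ 2 / (1 + ‖x‖ ^ 2) := by
    simp only [sqL2, Real.rpow_neg_one, inv_mul_eq_div]
    exact setIntegral_eq_integral_of_forall_compl_eq_zero
      fun x hx => by simp [hφ.eq_zero_of_notMem hx]
  have hvector : ∫ x in Ω, ‖gradient φ x‖ ^ 2 = ∫ x, ‖gradient φ x‖ ^ 2 :=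
    setIntegral_eq_integral_of_forall_compl_eq_zero
      fun x hx => by simp [hφ.gradient_eq_zero_of_notMem hx]
  rw [nrmL2, nrmL2V_zero, hscalar, hvector, ← Real.sqrt_sq (cN_pos hN).le,
    ← Real.sqrt_mul (sq_nonneg _)]
  exact Real.sqrt_le_sqrt hardy

end TestFunctions

section Energy

variable {Ω : Set (Euc N)} {v w : Euc N → Euc N}

lemma nrmA_congr_ae (A : Euc N → Euc N →L[ℝ] Euc N) (h : v =ᵐ[volume.restrict Ω] w) :
    nrmA Ω A v = nrmA Ω A w := by
  refine congrArg Real.sqrt (integral_congr_ae ?_)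
  filter_upwards [h] with x hx
  rw [hx]

lemma nrmA_sub_comm (Ω : Set (Euc N)) (A : Euc N → Euc N →L[ℝ] Euc N) (v w : Euc N → Euc N) :
    nrmA Ω A (fun x => v x - w x) = nrmA Ω A (fun x => w x - v x) := by
  refine congrArg Real.sqrt (integral_congr_ae (.of_forall fun x => ?_))
  dsimp only
  rw [← neg_sub (w x), map_neg, inner_neg_neg]

/- Let `n → ∞` in the bound, which gives `‖e‖ ^ 2 ≤ R * ‖e‖`. -/
lemma norm_le_of_tendsto_of_forall_inner_le {E : Type*} [SeminormedAddCommGroup E]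
    [InnerProductSpace ℝ E] {e : E} {g : ℕ → E} {R : ℝ} (hR : 0 ≤ R)
    (hg : Tendsto (fun n => ‖e - g n‖) atTop (𝓝 0)) (h : ∀ n, ⟪e, g n⟫ ≤ R * ‖g n‖) :
    ‖e‖ ≤ R := by
  have hlim : Tendsto g atTop (𝓝 e) := by
    rw [tendsto_iff_norm_sub_tendsto_zero]
    simpa only [norm_sub_rev] using hg
  have hself : ⟪e, e⟫ ≤ R * ‖e‖ :=
    le_of_tendsto_of_tendsto' (tendsto_const_nhds.inner hlim) (hlim.norm.const_mul R) h
  rw [real_inner_self_eq_norm_mul_norm] at hself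
  rcases (norm_nonneg e).eq_or_lt with hzero | hpos
  · exact hzero ▸ hR
  · exact le_of_mul_le_mul_right hself hpos

/-- The space of square-integrable vector fields on `Ω`, as functions rather than almost
everywhere classes, since the weighted products are defined on functions. -/
def L2Field (Ω : Set (Euc N)) : Submodule ℝ (Euc N → Euc N) where
  carrier := {v | MemLp v 2 (volume.restrict Ω)}
  add_mem' := MemLp.add
  zero_mem' := MemLp.zero
  smul_mem' c _ hv := hv.const_smul c

namespace Coeff

variable (M : Coeff N Ω)

lemma memLp_apply (hv : MemLp v 2 (volume.restrict Ω)) :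
    MemLp (fun x => M.A x (v x)) 2 (volume.restrict Ω) := by
  have hcoord i : AEStronglyMeasurable (fun x => v x i) (volume.restrict Ω) :=
    (EuclideanSpace.proj (𝕜 := ℝ) i : Euc N →L[ℝ] ℝ).continuous.comp_aestronglyMeasurable hv.1
  have expand x : M.A x (v x) = ∑ i, v x i • M.A x (EuclideanSpace.single i 1) := by
    conv_lhs => rw [← (EuclideanSpace.basisFun (Fin N) ℝ).sum_repr (v x)]
    simp only [map_sum, map_smul, EuclideanSpace.basisFun_repr, EuclideanSpace.basisFun_apply]
  have hmeas : AEStronglyMeasurable (fun x => M.A x (v x)) (volume.restrict Ω) := by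
    simp only [expand]
    exact Finset.aestronglyMeasurable_fun_sum _ fun i _ => (hcoord i).smul (M.meas _)
  obtain ⟨C, hC⟩ := M.bdd
  refine hv.of_le_mul (c := C) hmeas ?_
  filter_upwards [hC] with x hx using hx _

lemma integrable_inner_apply (hv : MemLp v 2 (volume.restrict Ω))
    (hw : MemLp w 2 (volume.restrict Ω)) :
    IntegrableOn (fun x => ⟪M.A x (v x), w x⟫) Ω :=
  integrable_inner_of_memLp_two (M.memLp_apply hv) hw

lemma ipA_comm (v w : Euc N → Euc N) : ipA Ω M.A v w = ipA Ω M.A w v := by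
  unfold ipA
  congr 1 with x
  rw [M.symm, real_inner_comm]

lemma sqA_nonneg (v : Euc N → Euc N) : 0 ≤ sqA Ω M.A v := by
  refine integral_nonneg_of_ae ?_
  filter_upwards [M.coer] with x hx using (by positivity : (0 : ℝ) ≤ _).trans (hx (v x))

/-- The energy pairing `ipA` as a semi-inner product on `L²(Ω;ℝ^N)`; its seminorm is `nrmA`. -/
abbrev energyCore : PreInnerProductSpace.Core ℝ (L2Field Ω) where
  inner v w := ipA Ω M.A v w
  conj_inner_symm v w := M.ipA_comm w v
  re_inner_nonneg v := M.sqA_nonneg v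
  add_left u v w := by
    simp only [ipA, Submodule.coe_add, Pi.add_apply, map_add, inner_add_left]
    exact integral_add (M.integrable_inner_apply u.2 w.2) (M.integrable_inner_apply v.2 w.2)
  smul_left v w r := by
    simp [ipA, real_inner_smul_left, integral_const_mul]

lemma abs_ipA_le (hv : MemLp v 2 (volume.restrict Ω)) (hw : MemLp w 2 (volume.restrict Ω)) :
    |ipA Ω M.A v w| ≤ nrmA Ω M.A v * nrmA Ω M.A w :=
  letI := M.energyCore
  InnerProductSpace.Core.norm_inner_le_norm (𝕜 := ℝ) (⟨v, hv⟩ : L2Field Ω) ⟨w, hw⟩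

lemma exists_nrmA_le_mul_nrmL2V :
    ∃ C, ∀ v, MemLp v 2 (volume.restrict Ω) → nrmA Ω M.A v ≤ C * nrmL2V Ω 0 v := by
  obtain ⟨C, hC⟩ := M.bdd
  refine ⟨√|C|, fun v hv => ?_⟩
  rw [nrmA, nrmL2V_zero, ← Real.sqrt_mul (abs_nonneg C), sqA, ipA, ← integral_const_mul]
  refine Real.sqrt_le_sqrt (integral_mono_ae (M.integrable_inner_apply hv hv)
    (((memLp_two_iff_integrable_sq_norm hv.1).1 hv).const_mul _) ?_)
  filter_upwards [hC] with x hx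
  calc ⟪M.A x (v x), v x⟫ ≤ ‖M.A x (v x)‖ * ‖v x‖ := real_inner_le_norm _ _
    _ ≤ |C| * ‖v x‖ * ‖v x‖ := by gcongr; exact (hx _).trans (by gcongr; exact le_abs_self C)
    _ = |C| * ‖v x‖ ^ 2 := by ring

lemma nrmL2V_le_mul_nrmA (hv : MemLp v 2 (volume.restrict Ω)) :
    nrmL2V Ω 0 v ≤ M.α * nrmA Ω M.A v := by
  have hα := M.α_pos
  rw [nrmA, nrmL2V_zero, ← Real.sqrt_sq hα.le, ← Real.sqrt_mul (sq_nonneg _), sqA, ipA,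
    ← integral_const_mul]
  refine Real.sqrt_le_sqrt (integral_mono_ae ((memLp_two_iff_integrable_sq_norm hv.1).1 hv)
    ((M.integrable_inner_apply hv hv).const_mul _) ?_)
  filter_upwards [M.coer] with x hx
  rw [← inv_mul_le_iff₀ (by positivity), ← inv_pow]
  exact hx (v x)

lemma nrmA_le_of_memG {e : Euc N → Euc N} (he : MemG Ω e) {R : ℝ} (hR : 0 ≤ R)
    (h : ∀ φ, IsTest Ω φ → ipA Ω M.A e (gradient φ) ≤ R * nrmA Ω M.A (gradient φ)) :
    nrmA Ω M.A e ≤ R := by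
  obtain ⟨heL2, φ, hφ, hlim⟩ := he
  have heLp := memL2V_zero_iff_memLp.1 heL2
  let _ : SeminormedAddCommGroup (L2Field Ω) :=
    InnerProductSpace.Core.toSeminormedAddCommGroup (𝕜 := ℝ) (c := M.energyCore)
  let _ : InnerProductSpace ℝ (L2Field Ω) := .ofCore M.energyCore
  let testGradient n : L2Field Ω := ⟨gradient (φ n), (hφ n).memLp_gradient⟩
  obtain ⟨C, hC⟩ := M.exists_nrmA_le_mul_nrmL2V
  have hzero : Tendsto (fun n => C * nrmL2V Ω 0 (fun x => e x - gradient (φ n) x)) atTop (𝓝 0) := by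
    simpa only [mul_zero] using hlim.const_mul C
  exact norm_le_of_tendsto_of_forall_inner_le (e := (⟨e, heLp⟩ : L2Field Ω)) (g := testGradient) hR
    (squeeze_zero (fun n => norm_nonneg _)
      (fun n => hC _ (heLp.sub (hφ n).memLp_gradient)) hzero) fun n => h _ (hφ n)

lemma ae_injective : ∀ᵐ x ∂volume.restrict Ω, Function.Injective (M.A x) := by
  filter_upwards [M.coer] with x hx
  refine (injective_iff_map_eq_zero _).2 fun ξ hξ => ?_
  have hle := hx ξ
  rw [hξ, inner_zero_left] at hle
  have hα := M.α_pos
  exact norm_eq_zero.1 (pow_eq_zero_iff two_ne_zero |>.1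
    (le_antisymm (nonpos_of_mul_nonpos_right hle (by positivity)) (sq_nonneg _)))

lemma ae_eq_of_isAInv_apply (hw : IsAInv Ω M.A (fun x => M.A x (v x)) w) :
    w =ᵐ[volume.restrict Ω] v := by
  filter_upwards [hw.2, M.ae_injective] with x hx hinj using hinj hx

end Coeff

end Energy

section Majorant

variable {Ω : Set (Euc N)} (M : Coeff N Ω) {f : Euc N → ℝ} {gu gt v w : Euc N → Euc N}
  {dv : Euc N → ℝ}

namespace Coeff

lemma abs_integral_mul_test_le (hN : 3 ≤ N) {r φ : Euc N → ℝ} (hr : MemL2 Ω 1 r)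
    (hφ : IsTest Ω φ) :
    |∫ x in Ω, r x * φ x| ≤ M.α * cN N * nrmL2 Ω 1 r * nrmA Ω M.A (gradient φ) := by
  have hr0 : 0 ≤ nrmL2 Ω 1 r := Real.sqrt_nonneg _
  have hc := cN_pos hN
  calc |∫ x in Ω, r x * φ x| ≤ nrmL2 Ω 1 r * nrmL2 Ω (-1) φ := hr.abs_integral_mul_le (hφ.memL2 _)
    _ ≤ nrmL2 Ω 1 r * (cN N * nrmL2V Ω 0 (gradient φ)) := by gcongr; exact hφ.nrmL2_le hN
    _ ≤ nrmL2 Ω 1 r * (cN N * (M.α * nrmA Ω M.A (gradient φ))) := by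
        gcongr; exact M.nrmL2V_le_mul_nrmA hφ.memLp_gradient
    _ = M.α * cN N * nrmL2 Ω 1 r * nrmA Ω M.A (gradient φ) := by ring

lemma ipA_sub_gradient_eq (hf : MemL2 Ω 1 f) (hgu : MemLp gu 2 (volume.restrict Ω))
    (hgt : MemLp gt 2 (volume.restrict Ω))
    (hu : IsWeakDiv Ω (fun x => M.A x (gu x)) (fun x => -f x))
    (hdv : MemL2 Ω 1 dv) (hv : IsWeakDiv Ω v dv) (hw : IsAInv Ω M.A v w)
    {φ : Euc N → ℝ} (hφ : IsTest Ω φ) :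
    ipA Ω M.A (fun x => gu x - gt x) (gradient φ) =
      (∫ x in Ω, (f x + dv x) * φ x) - ipA Ω M.A (fun x => gt x - w x) (gradient φ) := by
  have hwLp := memL2V_zero_iff_memLp.1 hw.1
  have hAgu := M.integrable_inner_apply hgu hφ.memLp_gradient
  have hAw := M.integrable_inner_apply hwLp hφ.memLp_gradient
  have hdiff : IntegrableOn
      (fun x => ⟪M.A x (gu x), gradient φ x⟫ - ⟪M.A x (w x), gradient φ x⟫) Ω := hAgu.sub hAw
  have hAtw : IntegrableOn (fun x => ⟪M.A x (gt x - w x), gradient φ x⟫) Ω :=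
    M.integrable_inner_apply (hgt.sub hwLp) hφ.memLp_gradient
  have flux_eq : ∫ x in Ω, ⟪M.A x (w x), gradient φ x⟫ = -∫ x in Ω, dv x * φ x := by
    rw [← hv φ hφ]
    refine integral_congr_ae ?_
    filter_upwards [hw.2] with x hx
    rw [hx]
  calc ipA Ω M.A (fun x => gu x - gt x) (gradient φ)
      = ∫ x in Ω, (⟪M.A x (gu x), gradient φ x⟫ - ⟪M.A x (w x), gradient φ x⟫ -
          ⟪M.A x (gt x - w x), gradient φ x⟫) := by
        simp only [ipA, map_sub, inner_sub_left]
        congr 1 with x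
        ring
    _ = -(∫ x in Ω, -f x * φ x) + (∫ x in Ω, dv x * φ x) -
          ipA Ω M.A (fun x => gt x - w x) (gradient φ) := by
        rw [integral_sub hdiff hAtw, integral_sub hAgu hAw, hu φ hφ, flux_eq,
          sub_neg_eq_add, ipA]
    _ = _ := by
        simp only [neg_mul, integral_neg, neg_neg, add_mul]
        rw [integral_add (hf.integrable_mul (hφ.memL2 _)) (hdv.integrable_mul (hφ.memL2 _))]

theorem nrmA_sub_le_majorant (hN : 3 ≤ N) (hf : MemL2 Ω 1 f)
    (hgu : MemLp gu 2 (volume.restrict Ω)) (he : MemG Ω (fun x => gu x - gt x))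
    (hu : IsWeakDiv Ω (fun x => M.A x (gu x)) (fun x => -f x))
    (hdv : MemL2 Ω 1 dv) (hv : IsWeakDiv Ω v dv) (hw : IsAInv Ω M.A v w) :
    nrmA Ω M.A (fun x => gu x - gt x) ≤
      M.α * cN N * nrmL2 Ω 1 (fun x => f x + dv x) + nrmA Ω M.A (fun x => gt x - w x) := by
  have hgt : MemLp gt 2 (volume.restrict Ω) := by
    simpa [Pi.sub_def] using hgu.sub (memL2V_zero_iff_memLp.1 he.1)
  refine M.nrmA_le_of_memG he ?_ fun φ hφ => ?_
  · have := M.α_pos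
    have := cN_pos hN
    simp only [nrmL2, nrmA]
    positivity
  have hres := M.abs_integral_mul_test_le hN (hf.add hdv) hφ
  have hflux := M.abs_ipA_le (hgt.sub (memL2V_zero_iff_memLp.1 hw.1)) hφ.memLp_gradient
  rw [M.ipA_sub_gradient_eq hf hgu hgt hu hdv hv hw hφ, add_mul]
  exact (sub_le_sub (le_abs_self _) (neg_abs_le _)).trans
    ((sub_neg_eq_add _ _).trans_le (add_le_add hres hflux))

theorem majorant_flux_eq (hw : IsAInv Ω M.A (fun x => M.A x (gu x)) w) :
    M.α * cN N * nrmL2 Ω 1 (fun x => f x + -f x) + nrmA Ω M.A (fun x => gt x - w x) =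
      nrmA Ω M.A (fun x => gu x - gt x) := by
  have hres : nrmL2 Ω 1 (fun x => f x + -f x) = 0 := by simp [nrmL2, sqL2]
  rw [hres, mul_zero, zero_add, nrmA_sub_comm Ω M.A gu gt]
  refine nrmA_congr_ae M.A ?_
  filter_upwards [M.ae_eq_of_isAInv_apply hw] with x hx
  rw [hx]

end Coeff

theorem stmt_5_general (Ω : Set (Euc N)) (hN : 3 ≤ N) (M : Coeff N Ω)
    (f : Euc N → ℝ) (hf : MemL2 Ω 1 f) (gu gt : Euc N → Euc N) (hgu : MemL2V Ω 0 gu)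
    (hweak : ∀ φ : Euc N → ℝ, IsTest Ω φ →
      (∫ x in Ω, ⟪M.A x (gu x), gradient φ x⟫) = ∫ x in Ω, f x * φ x)
    (he : MemG Ω (fun x => gu x - gt x)) :
    MemL2V Ω 0 (fun x => M.A x (gu x)) ∧
    IsWeakDiv Ω (fun x => M.A x (gu x)) (fun x => - f x) ∧
    MemL2 Ω 1 (fun x => - f x) ∧
    (∀ w : Euc N → Euc N, IsAInv Ω M.A (fun x => M.A x (gu x)) w →
      M.α * cN N * nrmL2 Ω 1 (fun x => f x + - f x) + nrmA Ω M.A (fun x => gt x - w x) =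
        nrmA Ω M.A (fun x => gu x - gt x)) ∧
    IsLeast {r : ℝ | ∃ (v : Euc N → Euc N) (dv : Euc N → ℝ) (w : Euc N → Euc N),
        MemL2V Ω 0 v ∧ MemL2 Ω 1 dv ∧ IsWeakDiv Ω v dv ∧ IsAInv Ω M.A v w ∧
        r = M.α * cN N * nrmL2 Ω 1 (fun x => f x + dv x) +
          nrmA Ω M.A (fun x => gt x - w x)}
      (nrmA Ω M.A (fun x => gu x - gt x)) := by
  have hguLp := memL2V_zero_iff_memLp.1 hgu
  have hflux : MemL2V Ω 0 (fun x => M.A x (gu x)) :=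
    memL2V_zero_iff_memLp.2 (M.memLp_apply hguLp)
  have hdiv : IsWeakDiv Ω (fun x => M.A x (gu x)) (fun x => -f x) := fun φ hφ => by
    simp only [hweak φ hφ, neg_mul, integral_neg, neg_neg]
  have hinv : IsAInv Ω M.A (fun x => M.A x (gu x)) gu := ⟨hgu, .of_forall fun _ => rfl⟩
  refine ⟨hflux, hdiv, hf.neg, fun w => M.majorant_flux_eq,
    ⟨_, _, gu, hflux, hf.neg, hdiv, hinv, (M.majorant_flux_eq hinv).symm⟩, ?_⟩
  rintro _ ⟨v, dv, w, -, hdv, hv, hw, rfl⟩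
  exact M.nrmA_sub_le_majorant hN hf hguLp he hdiv hdv hv hw

end Majorant

/-- Sharpness of the conforming upper bound: `v̂ = A∇û` realizes equality, and the infimum
of the majorant equals `‖∇(û − ũ)‖_A` and is attained. -/
theorem stmt_5 (Ω : Set (Euc N)) (hΩ : IsOpen Ω) (hN : 3 ≤ N) (M : Coeff N Ω)
    (f : Euc N → ℝ) (hf : MemL2 Ω 1 f)
    (uh : Euc N → ℝ) (gu : Euc N → Euc N)
    (huh : MemL2 Ω (-1) uh) (hgu : MemL2V Ω 0 gu) (hguw : IsWeakGrad Ω uh gu)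
    (hweak : ∀ φ : Euc N → ℝ, IsTest Ω φ →
      (∫ x in Ω, ⟪M.A x (gu x), gradient φ x⟫) = ∫ x in Ω, f x * φ x)
    (ut : Euc N → ℝ) (gt : Euc N → Euc N)
    (hut : MemL2 Ω (-1) ut) (hgt : MemL2V Ω 0 gt) (hgtw : IsWeakGrad Ω ut gt)
    (he : MemH10 Ω (fun x => uh x - ut x) (fun x => gu x - gt x)) :
    MemL2V Ω 0 (fun x => M.A x (gu x)) ∧
    IsWeakDiv Ω (fun x => M.A x (gu x)) (fun x => - f x) ∧
    MemL2 Ω 1 (fun x => - f x) ∧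
    (∀ w : Euc N → Euc N, IsAInv Ω M.A (fun x => M.A x (gu x)) w →
      M.α * cN N * nrmL2 Ω 1 (fun x => f x + - f x) + nrmA Ω M.A (fun x => gt x - w x) =
        nrmA Ω M.A (fun x => gu x - gt x)) ∧
    IsLeast {r : ℝ | ∃ (v : Euc N → Euc N) (dv : Euc N → ℝ) (w : Euc N → Euc N),
        MemL2V Ω 0 v ∧ MemL2 Ω 1 dv ∧ IsWeakDiv Ω v dv ∧ IsAInv Ω M.A v w ∧
        r = M.α * cN N * nrmL2 Ω 1 (fun x => f x + dv x) +
          nrmA Ω M.A (fun x => gt x - w x)}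
      (nrmA Ω M.A (fun x => gu x - gt x)) :=
  stmt_5_general Ω hN M f hf gu gt hgu hweak ⟨he.2.1, he.2.2.2.imp fun _ h => ⟨h.1, h.2.2⟩⟩
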